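/- arXiv:2304.14069 — 6 statements merged into one kernel-verified Lean document; each statement's English description precedes it below -/
import Mathlib

section
/- Let P be a family assigning to each natural number n a set P_n of n-variable Boolean functions, such that for every injection u : Fin m → Fin n and every m-variable Boolean function f, f ∈ P_m if and only if the n-variable function x ↦ f(x ∘ u) belongs to P_n. Then for every n, the number of non-degenerate n-variable functions in P_n equals the alternating sum over i = 0,…,n of (−1)^{n−i} (n choose i) times the number of i-variable functions in P_i. -/
/-- Monotone increasing in the i-th variable. -/
def MonoIncIn {n : ℕ} (f : (Fin n → Bool) → Bool) (i : Fin n) : Prop :=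
  ∀ x : Fin n → Bool, f (Function.update x i false) ≤ f (Function.update x i true)

/-- Monotone decreasing in the i-th variable. -/
def MonoDecIn {n : ℕ} (f : (Fin n → Bool) → Bool) (i : Fin n) : Prop :=
  ∀ x : Fin n → Bool, f (Function.update x i true) ≤ f (Function.update x i false)

/-- A monotone Boolean function: monotone increasing in every variable. -/
def IsMonotoneBF {n : ℕ} (f : (Fin n → Bool) → Bool) : Prop :=
  ∀ i : Fin n, MonoIncIn f i

/-- A unate Boolean function: for each variable, monotone increasing or decreasing. -/
def IsUnate {n : ℕ} (f : (Fin n → Bool) → Bool) : Prop :=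
  ∀ i : Fin n, MonoIncIn f i ∨ MonoDecIn f i

/-- Non-degenerate in the i-th variable. -/
def NonDegenerateIn {n : ℕ} (f : (Fin n → Bool) → Bool) (i : Fin n) : Prop :=
  ∃ x : Fin n → Bool, f x ≠ f (Function.update x i (! x i))

/-- A non-degenerate Boolean function: non-degenerate in every variable. -/
def NonDegenerate {n : ℕ} (f : (Fin n → Bool) → Bool) : Prop :=
  ∀ i : Fin n, NonDegenerateIn f i

/-- A balanced Boolean function takes the value true exactly 2^(n-1) times. -/
def IsBalanced {n : ℕ} (f : (Fin n → Bool) → Bool) : Prop :=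
  Nat.card {x : Fin n → Bool // f x = true} = 2 ^ (n - 1)

/-- The weight of a Boolean function: number of inputs on which it is true. -/
noncomputable def weightBF {n : ℕ} (f : (Fin n → Bool) → Bool) : ℕ :=
  Nat.card {x : Fin n → Bool // f x = true}

/-- Concatenation f = g || h of two n-variable Boolean functions. -/
def concatBF {n : ℕ} (g h : (Fin n → Bool) → Bool) : (Fin (n + 1) → Bool) → Bool :=
  fun x => if x 0 = true then h (fun i => x i.succ) else g (fun i => x i.succ)

/-- Equivalence under permutation of variables, on the subtype of functions with property P. -/
def varEquiv (n : ℕ) (P : ((Fin n → Bool) → Bool) → Prop) :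
    Setoid {f : (Fin n → Bool) → Bool // P f} where
  r f g := ∃ π : Equiv.Perm (Fin n),
    ∀ x : Fin n → Bool, (g : (Fin n → Bool) → Bool) x = (f : (Fin n → Bool) → Bool) (x ∘ π)
  iseqv := by
    constructor
    · intro f
      exact ⟨Equiv.refl _, fun x => by simp⟩
    · rintro f g ⟨π, h⟩
      refine ⟨π.symm, fun x => ?_⟩
      simpa [Function.comp_def] using (h (x ∘ π.symm)).symm
    · rintro f g k ⟨π1, h1⟩ ⟨π2, h2⟩
      refine ⟨π1.trans π2, fun x => ?_⟩
      rw [h2 x, h1 (x ∘ π2)]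
      rfl

/-!
A function of `n` variables that depends only on a set `s` of them is the same thing as a function
of `#s` variables. Since a function depends only on `s` exactly when it ignores each variable
outside `s`, the members of the family that ignore every variable outside `s` are counted by the
members on `#s` variables. Inclusion–exclusion over the sets of ignored variables then counts the
functions that ignore none.
-/

section DependsOn

variable {ι : Type*} {α : ι → Type*} {β : Type*} {f : (∀ i, α i) → β}

theorem dependsOn_inter {s t : Set ι} (hs : DependsOn f s) (ht : DependsOn f t) :
    DependsOn f (s ∩ t) := by
  classical
  intro x y hxy
  calc
    f x = f (s.piecewise x y) := hs fun i hi => (Set.piecewise_eq_of_mem s x y hi).symm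
    _ = f y := ht fun i hit => by
      by_cases his : i ∈ s
      · rw [Set.piecewise_eq_of_mem s x y his, hxy i ⟨his, hit⟩]
      · exact Set.piecewise_eq_of_notMem s x y his

theorem dependsOn_compl_iff_forall_mem {t : Set ι} (ht : t.Finite) :
    DependsOn f tᶜ ↔ ∀ i ∈ t, DependsOn f {i}ᶜ := by
  refine ⟨fun h i hi => h.mono (Set.compl_subset_compl.2 (Set.singleton_subset_iff.2 hi)), ?_⟩
  induction t, ht using Set.Finite.induction_on with
  | empty => exact fun _ => Set.compl_empty (α := ι) ▸ dependsOn_univ f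
  | @insert j t _ _ ih =>
    intro h
    rw [Set.insert_eq, Set.compl_union]
    exact dependsOn_inter (h j (Set.mem_insert j t))
      (ih fun i hi => h i (Set.mem_insert_of_mem j hi))

end DependsOn

section Reindexing

variable {ι κ α β : Type*} [Nonempty α]

theorem dependsOn_range_iff_exists_comp (u : κ → ι) (f : (ι → α) → β) :
    DependsOn f (Set.range u) ↔ ∃ g : (κ → α) → β, f = fun x => g (x ∘ u) := by
  have : Nonempty β := ⟨f (Classical.arbitrary _)⟩
  calc
    DependsOn f (Set.range u) ↔ f.FactorsThrough (· ∘ u) := by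
      simp only [DependsOn, Function.FactorsThrough, Set.forall_mem_range, funext_iff,
        Function.comp_apply]
    _ ↔ ∃ g : (κ → α) → β, f = fun x => g (x ∘ u) := Function.factorsThrough_iff f

theorem card_and_dependsOn_range {u : κ → ι} (hu : Function.Injective u)
    {P : ((ι → α) → β) → Prop} {Q : ((κ → α) → β) → Prop}
    (hQP : ∀ g, Q g ↔ P fun x => g (x ∘ u)) :
    Nat.card {f // P f ∧ DependsOn f (Set.range u)} = Nat.card {g // Q g} := by
  symm
  refine Nat.card_eq_of_bijective
    (fun g => ⟨fun x => g.1 (x ∘ u), (hQP g).1 g.2,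
      (dependsOn_range_iff_exists_comp u _).2 ⟨g, rfl⟩⟩) ⟨fun g g' h => ?_, ?_⟩
  · exact Subtype.ext (hu.surjective_comp_right.injective_comp_right (Subtype.ext_iff.1 h))
  · rintro ⟨f, hPf, hf⟩
    obtain ⟨g, rfl⟩ := (dependsOn_range_iff_exists_comp u f).1 hf
    exact ⟨⟨g, (hQP g).2 hPf⟩, rfl⟩

end Reindexing

theorem card_forall_not_eq_sum_finset {ι X : Type*} [Fintype ι] [Finite X]
    (D : ι → X → Prop) :
    (Nat.card {x // ∀ i, ¬ D i x} : ℤ) =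
      ∑ t : Finset ι, (-1 : ℤ) ^ t.card * Nat.card {x // ∀ i ∈ t, D i x} := by
  classical
  have := Fintype.ofFinite X
  have hinf (E : ι → X → Prop) [∀ i, DecidablePred (E i)] (t : Finset ι) :
      (t.inf fun i => ({x | E i x} : Finset X)).card = Nat.card {x // ∀ i ∈ t, E i x} := by
    rw [Nat.card_eq_fintype_card, Fintype.card_subtype]
    congr 1
    ext x
    simp only [Finset.mem_inf, Finset.mem_filter_univ]
  simpa only [Finset.compl_filter, hinf, Finset.mem_univ, forall_const, Finset.powerset_univ] using
    Finset.inclusion_exclusion_card_inf_compl Finset.univ fun i => {x | D i x}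

theorem card_forall_not_eq_sum_range {ι X : Type*} [Fintype ι] [Finite X]
    (D : ι → X → Prop) (c : ℕ → ℕ)
    (hc : ∀ s : Finset ι, Nat.card {x // ∀ i ∉ s, D i x} = c s.card) :
    (Nat.card {x // ∀ i, ¬ D i x} : ℤ) =
      ∑ k ∈ Finset.range (Fintype.card ι + 1),
        (-1 : ℤ) ^ (Fintype.card ι - k) * (Fintype.card ι).choose k * c k := by
  classical
  calc
    (Nat.card {x // ∀ i, ¬ D i x} : ℤ)
      = ∑ t : Finset ι, (-1 : ℤ) ^ t.card * Nat.card {x // ∀ i ∈ t, D i x} :=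
        card_forall_not_eq_sum_finset D
    _ = ∑ s : Finset ι, (-1 : ℤ) ^ (Fintype.card ι - s.card) * c s.card :=
        Fintype.sum_bijective compl compl_bijective _ _ fun t => by
          rw [← hc, ← Finset.card_compl, compl_compl]
          simp only [Finset.mem_compl, not_not]
    _ = ∑ k ∈ Finset.range (Fintype.card ι + 1),
          (Fintype.card ι).choose k • ((-1 : ℤ) ^ (Fintype.card ι - k) * c k) := by
        rw [← Finset.powerset_univ, ← Finset.card_univ]
        exact Finset.sum_powerset_apply_card
          fun k => (-1 : ℤ) ^ ((Finset.univ : Finset ι).card - k) * c k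
    _ = _ := Finset.sum_congr rfl fun k _ => by rw [nsmul_eq_mul]; ring

theorem card_and_forall_notMem_dependsOn {α β : Type*} [Nonempty α]
    {P : (n : ℕ) → ((Fin n → α) → β) → Prop}
    (hP : ∀ (m n : ℕ) (u : Fin m ↪o Fin n) (f : (Fin m → α) → β),
      P m f ↔ P n (fun x => f (x ∘ u)))
    {n : ℕ} (s : Finset (Fin n)) :
    Nat.card {f // P n f ∧ ∀ i ∉ s, DependsOn f {i}ᶜ} = Nat.card {f // P s.card f} := by
  let u : Fin s.card ↪o Fin n := s.orderEmbOfFin rfl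
  have hf (f : (Fin n → α) → β) :
      (∀ i ∉ s, DependsOn f {i}ᶜ) ↔ DependsOn f (Set.range u) := by
    rw [Finset.range_orderEmbOfFin, ← compl_compl (s : Set (Fin n)),
      dependsOn_compl_iff_forall_mem (Set.toFinite _)]
    rfl
  simp only [hf]
  exact card_and_dependsOn_range u.injective (hP s.card n u)

theorem stmt1_general {α β : Type*} [Nonempty α] (P : (n : ℕ) → ((Fin n → α) → β) → Prop)
    (hP : ∀ (m n : ℕ) (u : Fin m ↪o Fin n) (f : (Fin m → α) → β),
      P m f ↔ P n (fun x => f (x ∘ u)))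
    (n : ℕ) [Finite {f // P n f}] :
    (Nat.card {f : (Fin n → α) → β // P n f ∧ ∀ i, ¬ DependsOn f {i}ᶜ} : ℤ)
      = ∑ i ∈ Finset.range (n + 1),
          (-1 : ℤ) ^ (n - i) * n.choose i * Nat.card {f : (Fin i → α) → β // P i f} := by
  have hc (s : Finset (Fin n)) :
      Nat.card {f : {f // P n f} // ∀ i ∉ s, DependsOn f.1 {i}ᶜ} = Nat.card {f // P s.card f} :=
    (Nat.card_congr (Equiv.subtypeSubtypeEquivSubtypeInter _ _)).trans
      (card_and_forall_notMem_dependsOn hP s)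
  rw [← Nat.card_congr (Equiv.subtypeSubtypeEquivSubtypeInter (P n) _)]
  simpa only [Fintype.card_fin] using card_forall_not_eq_sum_range
    (fun i (f : {f // P n f}) => DependsOn f.1 {i}ᶜ) (fun k => Nat.card {f // P k f}) hc

theorem nonDegenerateIn_iff_not_dependsOn {n : ℕ} {f : (Fin n → Bool) → Bool} {i : Fin n} :
    NonDegenerateIn f i ↔ ¬ DependsOn f {i}ᶜ := by
  rw [← not_iff_not, not_not]
  simp only [NonDegenerateIn, not_exists, not_not]
  constructor
  · intro h x y hxy
    have hy : y = Function.update x i (y i) :=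
      Function.eq_update_iff.2 ⟨rfl, fun j hj => (hxy j hj).symm⟩
    rw [hy]
    rcases Bool.eq_or_eq_not (y i) (x i) with hi | hi
    · rw [hi, Function.update_eq_self]
    · rw [hi, h x]
  · exact fun h x => h fun j hj => (Function.update_of_ne hj _ _).symm

theorem stmt1 (P : (n : ℕ) → ((Fin n → Bool) → Bool) → Prop)
    (hP : ∀ (m n : ℕ) (u : Fin m → Fin n), Function.Injective u →
      ∀ f : (Fin m → Bool) → Bool, P m f ↔ P n (fun x => f (x ∘ u)))
    (n : ℕ) :
    (Nat.card {f : (Fin n → Bool) → Bool // P n f ∧ NonDegenerate f} : ℤ)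
      = ∑ i ∈ Finset.range (n + 1),
          (-1 : ℤ) ^ (n - i) * n.choose i * Nat.card {f : (Fin i → Bool) → Bool // P i f} := by
  simp only [NonDegenerate, nonDegenerateIn_iff_not_dependsOn]
  exact stmt1_general P (fun m n u => hP m n u u.injective) n
end

section
/- For every n ≥ 0, the number of n-variable non-degenerate unate Boolean functions equals 2^n times the number of n-variable non-degenerate monotone Boolean functions. -/
section NegateInputs

open scoped symmDiff

variable {ι α : Type*}

/-- The function obtained from `f` by negating the inputs selected by `s`, which turns monotone
functions into unate ones. The set of negated variables is encoded by its indicator `s : ι → Bool`,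
so that the symmetric difference `s ∆ x` is the pointwise exclusive or. -/
def negateInputs (s : ι → Bool) (f : (ι → Bool) → α) : (ι → Bool) → α :=
  fun x => f (s ∆ x)

theorem negateInputs_involutive (s : ι → Bool) :
    Function.Involutive (negateInputs s : ((ι → Bool) → α) → (ι → Bool) → α) :=
  fun f => funext fun x => congrArg f (symmDiff_symmDiff_cancel_left s x)

theorem negateInputs_update [DecidableEq ι] (s : ι → Bool) (f : (ι → Bool) → α) (x : ι → Bool)
    (i : ι) (b : Bool) :
    negateInputs s f (Function.update x i b) = f (Function.update (s ∆ x) i (s i ∆ b)) :=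
  congrArg f (funext (Function.apply_update (fun j => (s j ∆ ·)) x i b))

variable {n : ℕ} {f : (Fin n → Bool) → Bool} {i : Fin n} {s : Fin n → Bool}

theorem monoIncIn_negateInputs_iff :
    MonoIncIn (negateInputs s f) i ↔ if s i then MonoDecIn f i else MonoIncIn f i :=
  calc MonoIncIn (negateInputs s f) i
      ↔ ∀ x, f (Function.update (s ∆ x) i (s i ∆ false)) ≤
          f (Function.update (s ∆ x) i (s i ∆ true)) := by
        simp only [MonoIncIn, negateInputs_update]
    _ ↔ ∀ y, f (Function.update y i (s i ∆ false)) ≤ f (Function.update y i (s i ∆ true)) :=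
        Iff.symm (symmDiff_right_surjective s).forall
    _ ↔ if s i then MonoDecIn f i else MonoIncIn f i := by
        cases s i <;> simp [MonoIncIn, MonoDecIn]

theorem nonDegenerateIn_negateInputs_iff :
    NonDegenerateIn (negateInputs s f) i ↔ NonDegenerateIn f i :=
  calc NonDegenerateIn (negateInputs s f) i
      ↔ ∃ x, f (s ∆ x) ≠ f (Function.update (s ∆ x) i (! (s ∆ x) i)) := by
        simp only [NonDegenerateIn, negateInputs_update, Pi.symmDiff_apply, Bool.symmDiff_eq_xor,
          Bool.xor_not]
        rfl
    _ ↔ NonDegenerateIn f i := Iff.symm (symmDiff_right_surjective s).exists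

theorem nonDegenerate_negateInputs_iff :
    NonDegenerate (negateInputs s f) ↔ NonDegenerate f :=
  forall_congr' fun _ => nonDegenerateIn_negateInputs_iff

end NegateInputs

section Unate

variable {n : ℕ} {f : (Fin n → Bool) → Bool} {i : Fin n} {s t : Fin n → Bool}

theorem MonoIncIn.update_eq_update (hinc : MonoIncIn f i) (hdec : MonoDecIn f i)
    (x : Fin n → Bool) (b c : Bool) :
    f (Function.update x i b) = f (Function.update x i c) := by
  have h : f (Function.update x i false) = f (Function.update x i true) :=
    le_antisymm (hinc x) (hdec x)
  cases b <;> cases c <;> simp only [h]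

theorem NonDegenerateIn.not_monoDecIn (hf : NonDegenerateIn f i) (hinc : MonoIncIn f i) :
    ¬ MonoDecIn f i := by
  intro hdec
  obtain ⟨x, hx⟩ := hf
  exact hx (by simpa only [Function.update_eq_self] using
    hinc.update_eq_update hdec x (x i) (!x i))

theorem isMonotoneBF_negateInputs_iff :
    IsMonotoneBF (negateInputs s f) ↔ ∀ i, if s i then MonoDecIn f i else MonoIncIn f i :=
  forall_congr' fun _ => monoIncIn_negateInputs_iff

theorem isUnate_iff_exists_isMonotoneBF_negateInputs :
    IsUnate f ↔ ∃ s, IsMonotoneBF (negateInputs s f) :=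
  calc IsUnate f
      ↔ ∀ i, ∃ b : Bool, if b then MonoDecIn f i else MonoIncIn f i := by simp [IsUnate]
    _ ↔ ∃ s : Fin n → Bool, ∀ i, if s i then MonoDecIn f i else MonoIncIn f i :=
      Classical.skolem
    _ ↔ ∃ s, IsMonotoneBF (negateInputs s f) := by simp only [isMonotoneBF_negateInputs_iff]

theorem IsMonotoneBF.isUnate_negateInputs (hf : IsMonotoneBF f) (s : Fin n → Bool) :
    IsUnate (negateInputs s f) :=
  isUnate_iff_exists_isMonotoneBF_negateInputs.2 ⟨s, by rwa [negateInputs_involutive s f]⟩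

theorem NonDegenerate.eq_of_isMonotoneBF_negateInputs (hf : NonDegenerate f)
    (hs : IsMonotoneBF (negateInputs s f)) (ht : IsMonotoneBF (negateInputs t f)) : s = t := by
  funext i
  have hsi := isMonotoneBF_negateInputs_iff.1 hs i
  have hti := isMonotoneBF_negateInputs_iff.1 ht i
  have hexcl : MonoIncIn f i → ¬ MonoDecIn f i := (hf i).not_monoDecIn
  cases hs' : s i <;> cases ht' : t i <;> simp_all

/-- The parametrization of the non-degenerate unate functions by a set of variables to negate and
a non-degenerate monotone function. -/
def unateOfMonotone
    (p : (Fin n → Bool) × {f : (Fin n → Bool) → Bool // IsMonotoneBF f ∧ NonDegenerate f}) :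
    {f : (Fin n → Bool) → Bool // IsUnate f ∧ NonDegenerate f} :=
  ⟨negateInputs p.1 p.2, p.2.2.1.isUnate_negateInputs p.1,
    nonDegenerate_negateInputs_iff.2 p.2.2.2⟩

theorem unateOfMonotone_injective : Function.Injective (unateOfMonotone (n := n)) := by
  rintro ⟨s, f, hf, hfnd⟩ ⟨t, g, hg, _⟩ h
  have hfg : negateInputs s f = negateInputs t g := congrArg Subtype.val h
  have hs : IsMonotoneBF (negateInputs s (negateInputs s f)) := by
    rwa [negateInputs_involutive s f]
  have ht : IsMonotoneBF (negateInputs t (negateInputs s f)) := by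
    rwa [hfg, negateInputs_involutive t g]
  obtain rfl : s = t :=
    (nonDegenerate_negateInputs_iff.2 hfnd).eq_of_isMonotoneBF_negateInputs hs ht
  obtain rfl : f = g := (negateInputs_involutive s).injective hfg
  rfl

theorem unateOfMonotone_surjective : Function.Surjective (unateOfMonotone (n := n)) := by
  rintro ⟨f, hf, hnd⟩
  obtain ⟨s, hs⟩ := isUnate_iff_exists_isMonotoneBF_negateInputs.1 hf
  exact ⟨⟨s, negateInputs s f, hs, nonDegenerate_negateInputs_iff.2 hnd⟩,
    Subtype.ext (negateInputs_involutive s f)⟩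

end Unate

theorem stmt2 (n : ℕ) :
    Nat.card {f : (Fin n → Bool) → Bool // IsUnate f ∧ NonDegenerate f}
      = 2 ^ n * Nat.card {f : (Fin n → Bool) → Bool // IsMonotoneBF f ∧ NonDegenerate f} := by
  rw [← Nat.card_eq_of_bijective unateOfMonotone
    ⟨unateOfMonotone_injective, unateOfMonotone_surjective⟩, Nat.card_prod]
  simp
end

section
/- Let f be an n-variable monotone Boolean function. Then the 2^n translated functions f_α (for α ∈ {0,1}^n), defined by f_α(x) = f(x ⊕ α) with componentwise XOR, are pairwise distinct if and only if f is non-degenerate. -/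
/-!
Translations compose by XOR, so two translates of `f` coincide exactly when `f` is invariant under
translation by the XOR of the two shifts; distinctness of the translates means that no nonzero
shift `γ` leaves `f` invariant. If `f` does not depend on variable `i`, the `i`-th unit shift does.
Conversely, let `γ i = true` and let `f` be invariant under `γ`. Translation by `γ` swaps the two
faces `x i = false` and `x i = true` of the cube, so the inequality between the values of `f` on
the faces, used once at `x` and once at `x ⊕ γ`, becomes an equality: `f` does not depend on `i`.
-/

section XorTranslate

open Function

variable {ι κ : Type*}

/-- The translate `f_α` of a function `f` on a Boolean cube, `x ↦ f (x ⊕ α)`. -/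
def xorTranslate (f : (ι → Bool) → κ) (α : ι → Bool) : (ι → Bool) → κ :=
  fun x => f fun i => xor (x i) (α i)

theorem xorTranslate_false (f : (ι → Bool) → κ) : xorTranslate f (fun _ => false) = f :=
  funext fun x => by simp only [xorTranslate, Bool.xor_false]

theorem xorTranslate_xor (f : (ι → Bool) → κ) (α β : ι → Bool) :
    xorTranslate f (fun i => xor (α i) (β i)) = xorTranslate (xorTranslate f β) α :=
  funext fun x => by simp only [xorTranslate, Bool.xor_assoc]

theorem xorTranslate_xorTranslate (f : (ι → Bool) → κ) (α : ι → Bool) :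
    xorTranslate (xorTranslate f α) α = f := by
  simp only [← xorTranslate_xor, Bool.xor_self, xorTranslate_false]

theorem xorTranslate_injective_iff {f : (ι → Bool) → κ} :
    Injective (xorTranslate f) ↔ ∀ γ, xorTranslate f γ = f → ∀ i, γ i = false := by
  constructor
  · intro hinj γ hγ
    exact congrFun (hinj (hγ.trans (xorTranslate_false f).symm))
  · intro hfix α β hαβ
    have hperiod : xorTranslate f (fun i => xor (α i) (β i)) = f := by
      rw [xorTranslate_xor, ← hαβ, xorTranslate_xorTranslate]
    exact funext fun i => by simpa using hfix _ hperiod i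

variable [DecidableEq ι]

theorem xorTranslate_apply_update (f : (ι → Bool) → κ) (γ x : ι → Bool) (i : ι) (b : Bool) :
    xorTranslate f γ (update x i b) =
      f (update (fun j => xor (x j) (γ j)) i (xor b (γ i))) :=
  congrArg f (funext (apply_update (fun j c => xor c (γ j)) x i b))

theorem xorTranslate_update_false_true (f : (ι → Bool) → κ) (i : ι) (x : ι → Bool) :
    xorTranslate f (update (fun _ => false) i true) x = f (update x i (!x i)) := by
  refine congrArg f (funext fun j => ?_)
  obtain rfl | hji := eq_or_ne j i
  · simp
  · simp [hji]

/-- Unateness in variable `i`: the function is increasing in that variable for all values of the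
others, or decreasing for all of them. The witness `b` is the value of the variable on the lower
face: `false` in the increasing case, `true` in the decreasing one. -/
def IsUnateIn [LE κ] (f : (ι → Bool) → κ) (i : ι) : Prop :=
  ∃ b : Bool, ∀ x : ι → Bool, f (update x i b) ≤ f (update x i (!b))

theorem IsUnateIn.update_not_eq_of_xorTranslate_eq [PartialOrder κ] {f : (ι → Bool) → κ} {i : ι}
    (hf : IsUnateIn f i) {γ : ι → Bool} (hi : γ i = true) (hγ : xorTranslate f γ = f)
    (x : ι → Bool) : f (update x i (!x i)) = f x := by
  obtain ⟨b, hb⟩ := hf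
  let y : ι → Bool := fun j => xor (x j) (γ j)
  have hswap (c : Bool) : f (update x i c) = f (update y i (!c)) := calc
    f (update x i c) = xorTranslate f γ (update x i c) := by rw [hγ]
    _ = f (update y i (!c)) := by rw [xorTranslate_apply_update, hi, Bool.xor_true]
  have hfaces : f (update x i b) = f (update x i (!b)) :=
    (hb x).antisymm <| calc
      f (update x i (!b)) = f (update y i b) := by rw [hswap, Bool.not_not]
      _ ≤ f (update y i (!b)) := hb y
      _ = f (update x i b) := (hswap b).symm
  nth_rewrite 3 [← update_eq_self i x]
  obtain hxb | hxb := Bool.eq_or_eq_not (x i) b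
  · rw [hxb, hfaces]
  · rw [hxb, Bool.not_not, hfaces]

theorem stmt6_general [PartialOrder κ] {f : (ι → Bool) → κ} (hf : ∀ i, IsUnateIn f i) :
    Injective (xorTranslate f) ↔ ∀ i, ∃ x, f x ≠ f (update x i (!x i)) := by
  rw [xorTranslate_injective_iff]
  constructor
  · intro hfix i
    by_contra! hdeg
    have hunit : xorTranslate f (update (fun _ => false) i true) = f :=
      funext fun x => (xorTranslate_update_false_true f i x).trans (hdeg x).symm
    simpa using hfix _ hunit i
  · intro hnd γ hγ i
    by_contra hi
    obtain ⟨x, hx⟩ := hnd i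
    exact hx ((hf i).update_not_eq_of_xorTranslate_eq (Bool.eq_true_of_not_eq_false hi) hγ x).symm

end XorTranslate

theorem stmt6 {n : ℕ} (f : (Fin n → Bool) → Bool) (hf : IsMonotoneBF f) :
    Function.Injective
        (fun α : Fin n → Bool => (fun x : Fin n → Bool => f (fun i => xor (x i) (α i))))
      ↔ NonDegenerate f :=
  stmt6_general fun i => ⟨false, hf i⟩
end

section
/- Let g and h be n-variable Boolean functions and let f = g||h be their (n+1)-variable concatenation. Then f is unate if and only if g and h are both unate and the following two conditions hold: (1) for each i ∈ {1,…,n}, g and h are either both monotone increasing in the i-th variable or both monotone decreasing in the i-th variable; (2) g ≤ h pointwise or h ≤ g pointwise. -/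
/-!
Each variable of `g || h` can be treated separately. In the new variable, `g || h` runs from `g`
to `h`, so its monotonicity there is a comparison of `g` with `h`. In an old variable it restricts
to `g` and to `h` on the two halves of the cube, so it is monotone there exactly when both are, in
the same direction. Increasing and decreasing are the cases `≤` and `≥` of one argument, valid for
any relation between the values at `false` and at `true`.
-/

section Concat

variable {n : ℕ} (g h : (Fin n → Bool) → Bool)

theorem concatBF_cons_false (y : Fin n → Bool) : concatBF g h (Fin.cons false y) = g y :=
  rfl

theorem concatBF_cons_true (y : Fin n → Bool) : concatBF g h (Fin.cons true y) = h y :=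
  rfl

theorem forall_concatBF_update_zero_iff (r : Bool → Bool → Prop) :
    (∀ x, r (concatBF g h (Function.update x 0 false)) (concatBF g h (Function.update x 0 true))) ↔
      ∀ y, r (g y) (h y) := by
  simp only [Fin.forall_fin_succ_pi, Fin.update_cons_zero, concatBF_cons_false,
    concatBF_cons_true, forall_const]

theorem forall_concatBF_update_succ_iff (r : Bool → Bool → Prop) (i : Fin n) :
    (∀ x, r (concatBF g h (Function.update x i.succ false))
        (concatBF g h (Function.update x i.succ true))) ↔
      (∀ y, r (g (Function.update y i false)) (g (Function.update y i true))) ∧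
        ∀ y, r (h (Function.update y i false)) (h (Function.update y i true)) := by
  simp only [Fin.forall_fin_succ_pi, Bool.forall_bool, ← Fin.cons_update, concatBF_cons_false,
    concatBF_cons_true]

theorem monoIncIn_concatBF_zero_iff : MonoIncIn (concatBF g h) 0 ↔ ∀ x, g x ≤ h x :=
  forall_concatBF_update_zero_iff g h (· ≤ ·)

theorem monoDecIn_concatBF_zero_iff : MonoDecIn (concatBF g h) 0 ↔ ∀ x, h x ≤ g x :=
  forall_concatBF_update_zero_iff g h (· ≥ ·)

theorem monoIncIn_concatBF_succ_iff (i : Fin n) :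
    MonoIncIn (concatBF g h) i.succ ↔ MonoIncIn g i ∧ MonoIncIn h i :=
  forall_concatBF_update_succ_iff g h (· ≤ ·) i

theorem monoDecIn_concatBF_succ_iff (i : Fin n) :
    MonoDecIn (concatBF g h) i.succ ↔ MonoDecIn g i ∧ MonoDecIn h i :=
  forall_concatBF_update_succ_iff g h (· ≥ ·) i

theorem isUnate_concatBF_iff :
    IsUnate (concatBF g h) ↔
      ((∀ x, g x ≤ h x) ∨ ∀ x, h x ≤ g x) ∧
        ∀ i, (MonoIncIn g i ∧ MonoIncIn h i) ∨ (MonoDecIn g i ∧ MonoDecIn h i) := by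
  simp only [IsUnate, Fin.forall_fin_succ, monoIncIn_concatBF_zero_iff,
    monoDecIn_concatBF_zero_iff, monoIncIn_concatBF_succ_iff, monoDecIn_concatBF_succ_iff]

end Concat

theorem stmt10 {n : ℕ} (g h : (Fin n → Bool) → Bool) :
    IsUnate (concatBF g h)
      ↔ IsUnate g ∧ IsUnate h
          ∧ (∀ i : Fin n, (MonoIncIn g i ∧ MonoIncIn h i) ∨ (MonoDecIn g i ∧ MonoDecIn h i))
          ∧ ((∀ x : Fin n → Bool, g x ≤ h x) ∨ (∀ x : Fin n → Bool, h x ≤ g x)) := by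
  rw [isUnate_concatBF_iff]
  constructor
  · rintro ⟨hcomp, hdir⟩
    have hg : IsUnate g := fun i => (hdir i).imp And.left And.left
    have hh : IsUnate h := fun i => (hdir i).imp And.right And.right
    exact ⟨hg, hh, hdir, hcomp⟩
  · rintro ⟨-, -, hdir, hcomp⟩
    exact ⟨hcomp, hdir⟩
end

section
/- Let P be a family assigning to each natural number n a set P_n of n-variable Boolean functions, such that for every injection u : Fin m → Fin n and every m-variable Boolean function f, f ∈ P_m if and only if the n-variable function x ↦ f(x ∘ u) belongs to P_n. Then for every n, the number of equivalence classes (under permutation of variables) of n-variable functions in P_n equals the sum over i = 0,…,n of the number of equivalence classes of non-degenerate i-variable functions in P_i. -/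
/-!
Reading an `m`-variable function along an injection `u : Fin m → Fin n` adds dummy variables, and
the essential variables of the result are the images under `u` of those of the original function.
Since a Boolean function depends on its essential variables only, each `n`-variable function is
obtained in this way from a non-degenerate function of its essential variables, and the latter is
unique up to a renaming of the variables. As any two injections `Fin m → Fin n` differ by a
permutation of `Fin n`, sending a non-degenerate function to its padding by dummy variables is a
bijection on equivalence classes.
-/

section Reindexing

open Function

theorem exists_equiv_comp_eq_of_range_eq {α β γ : Type*} {u : α → γ} {v : β → γ}
    (hu : Injective u) (hv : Injective v) (h : Set.range u = Set.range v) :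
    ∃ σ : α ≃ β, v ∘ σ = u := by
  refine ⟨(Equiv.ofInjective u hu).trans
    ((Equiv.setCongr h).trans (Equiv.ofInjective v hv).symm), funext fun a => ?_⟩
  simp [Equiv.apply_ofInjective_symm]

theorem exists_eq_comp_of_dependsOn_range {ι κ α β : Type*} [Nonempty β] {u : ι → κ}
    {f : (κ → α) → β} (hf : DependsOn f (Set.range u)) :
    ∃ g : (ι → α) → β, f = fun x => g (x ∘ u) :=
  (factorsThrough_iff f).1 fun _ _ hxy => hf (Set.forall_mem_range.2 (congrFun hxy))

end Reindexing

section EssentialVars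

variable {m n : ℕ} {u : Fin m → Fin n}

/-- The essential variables of a Boolean function: those it is non-degenerate in. -/
def essentialVars (f : (Fin n → Bool) → Bool) : Set (Fin n) :=
  {k | NonDegenerateIn f k}

theorem nonDegenerate_iff_essentialVars_eq_univ {f : (Fin n → Bool) → Bool} :
    NonDegenerate f ↔ essentialVars f = Set.univ :=
  Set.eq_univ_iff_forall.symm

theorem apply_update_of_notMem_essentialVars {f : (Fin n → Bool) → Bool} {k : Fin n}
    (hk : k ∉ essentialVars f) (x : Fin n → Bool) (b : Bool) :
    f (Function.update x k b) = f x := by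
  rcases eq_or_ne b (x k) with rfl | hb
  · rw [Function.update_eq_self]
  · rw [Bool.eq_not_of_ne hb]
    by_contra hne
    exact hk ⟨x, Ne.symm hne⟩

theorem dependsOn_essentialVars (f : (Fin n → Bool) → Bool) :
    DependsOn f (essentialVars f) := by
  intro x y hxy
  -- Overwrite `x` by `y` one coordinate at a time.
  suffices h : ∀ s : Finset (Fin n), f (s.piecewise y x) = f x by
    simpa only [Finset.piecewise_univ] using (h Finset.univ).symm
  intro s
  induction s using Finset.induction_on with
  | empty => rw [Finset.piecewise_empty]
  | insert k s hks ih =>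
    rw [Finset.piecewise_insert, ← ih]
    by_cases hk : k ∈ essentialVars f
    · have hyk : y k = s.piecewise y x k := by
        rw [Finset.piecewise_eq_of_notMem _ _ _ hks, hxy k hk]
      rw [hyk, Function.update_eq_self]
    · exact apply_update_of_notMem_essentialVars hk _ _

theorem essentialVars_comp (hu : Function.Injective u) (f : (Fin m → Bool) → Bool) :
    essentialVars (fun x => f (x ∘ u)) = u '' essentialVars f := by
  ext k
  constructor
  · rintro ⟨x, hx⟩
    obtain ⟨i, rfl⟩ : k ∈ Set.range u := by
      by_contra hk
      exact hx (by simp only [Function.update_comp_eq_of_notMem_range x _ hk])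
    refine ⟨i, ⟨x ∘ u, ?_⟩, rfl⟩
    simpa only [Function.update_comp_eq_of_injective x hu, Function.comp_apply] using hx
  · rintro ⟨i, ⟨y, hy⟩, rfl⟩
    obtain ⟨x, rfl⟩ := hu.surjective_comp_right y
    refine ⟨x, ?_⟩
    simpa only [Function.update_comp_eq_of_injective x hu, Function.comp_apply] using hy

theorem nonDegenerate_iff_essentialVars_comp_eq_range (hu : Function.Injective u)
    {f : (Fin m → Bool) → Bool} :
    NonDegenerate f ↔ essentialVars (fun x => f (x ∘ u)) = Set.range u := by
  rw [essentialVars_comp hu, ← Set.image_univ, hu.image_injective.eq_iff,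
    nonDegenerate_iff_essentialVars_eq_univ]

theorem exists_nonDegenerate_comp_eq (f : (Fin n → Bool) → Bool) :
    ∃ (m : ℕ) (u : Fin m → Fin n) (g : (Fin m → Bool) → Bool),
      Function.Injective u ∧ NonDegenerate g ∧ f = fun x => g (x ∘ u) := by
  obtain ⟨m, u, hu, hrange⟩ : ∃ (m : ℕ) (u : Fin m → Fin n),
      Function.Injective u ∧ Set.range u = essentialVars f := by
    obtain ⟨m, ⟨e⟩⟩ := Finite.exists_equiv_fin (essentialVars f)
    exact ⟨m, Subtype.val ∘ e.symm, Subtype.val_injective.comp e.symm.injective,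
      (e.symm.surjective.range_comp _).trans Subtype.range_coe⟩
  obtain ⟨g, rfl⟩ := exists_eq_comp_of_dependsOn_range (hrange ▸ dependsOn_essentialVars f)
  exact ⟨m, u, g, hu, (nonDegenerate_iff_essentialVars_comp_eq_range hu).2 hrange.symm, rfl⟩

theorem NonDegenerate.exists_equiv_of_comp_eq {l : ℕ} {v : Fin l → Fin n}
    (hu : Function.Injective u) (hv : Function.Injective v)
    {f : (Fin m → Bool) → Bool} {g : (Fin l → Bool) → Bool}
    (hf : NonDegenerate f) (hg : NonDegenerate g)
    (h : (fun x : Fin n → Bool => g (x ∘ v)) = fun x => f (x ∘ u)) :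
    ∃ σ : Fin m ≃ Fin l, ∀ y, g y = f (y ∘ σ) := by
  have hrange : Set.range u = Set.range v := by
    rw [← (nonDegenerate_iff_essentialVars_comp_eq_range hu).1 hf,
      ← (nonDegenerate_iff_essentialVars_comp_eq_range hv).1 hg, h]
  obtain ⟨σ, rfl⟩ := exists_equiv_comp_eq_of_range_eq hu hv hrange
  refine ⟨σ, fun y => ?_⟩
  obtain ⟨x, rfl⟩ := hv.surjective_comp_right y
  exact congrFun h x

end EssentialVars

/-- A family of classes of Boolean functions that is stable under adding dummy variables, removing
them and permuting the variables; all three are expressed by reading a function along an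
injection of its index set. -/
def IsInjectionInvariant (P : (n : ℕ) → ((Fin n → Bool) → Bool) → Prop) : Prop :=
  ∀ (m n : ℕ) (u : Fin m → Fin n), Function.Injective u →
    ∀ f : (Fin m → Bool) → Bool, P m f ↔ P n (fun x => f (x ∘ u))

namespace IsInjectionInvariant

variable {P : (n : ℕ) → ((Fin n → Bool) → Bool) → Prop} {m n : ℕ}

/-- The map on equivalence classes that adds `n - m` dummy variables to a non-degenerate
`m`-variable function. The dummy variables are put last, which is immaterial up to equivalence. -/
def padClass (hP : IsInjectionInvariant P) (hmn : m ≤ n) :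
    Quotient (varEquiv m (fun f => P m f ∧ NonDegenerate f)) → Quotient (varEquiv n (P n)) :=
  Quotient.map
    (fun f => ⟨fun x => f.1 (x ∘ Fin.castLE hmn),
      (hP m n _ (Fin.castLE_injective hmn) f.1).1 f.2.1⟩)
    (by
      rintro f g ⟨σ, hσ⟩
      have hc := Fin.castLE_injective hmn
      obtain ⟨π, hπ⟩ := Equiv.Perm.exists_extending_pair _ _ hc (hc.comp σ.injective)
      refine ⟨π, fun x => ?_⟩
      calc g.1 (x ∘ Fin.castLE hmn) = f.1 (x ∘ (Fin.castLE hmn ∘ σ)) := hσ _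
        _ = f.1 ((x ∘ π) ∘ Fin.castLE hmn) :=
          congrArg f.1 (funext fun i => congrArg x (hπ i).symm))

theorem exists_equiv_of_padClass_eq (hP : IsInjectionInvariant P) {l : ℕ} (hmn : m ≤ n)
    (hln : l ≤ n) {f : {f // P m f ∧ NonDegenerate f}} {g : {g // P l g ∧ NonDegenerate g}}
    (h : hP.padClass hmn (Quotient.mk _ f) = hP.padClass hln (Quotient.mk _ g)) :
    ∃ σ : Fin m ≃ Fin l, ∀ y, g.1 y = f.1 (y ∘ σ) := by
  obtain ⟨π, hπ⟩ := Quotient.exact h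
  exact f.2.2.exists_equiv_of_comp_eq (π.injective.comp (Fin.castLE_injective hmn))
    (Fin.castLE_injective hln) g.2.2 (funext hπ)

theorem exists_padClass_eq (hP : IsInjectionInvariant P) (c : Quotient (varEquiv n (P n))) :
    ∃ (m : ℕ) (hmn : m ≤ n) (d : Quotient (varEquiv m (fun f => P m f ∧ NonDegenerate f))),
      hP.padClass hmn d = c := by
  obtain ⟨f, hf⟩ := c
  obtain ⟨m, u, g, hu, hg, rfl⟩ := exists_nonDegenerate_comp_eq f
  have hmn : m ≤ n := by simpa using Fintype.card_le_of_injective u hu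
  obtain ⟨π, hπ⟩ :=
    Equiv.Perm.exists_extending_pair _ _ (Fin.castLE_injective hmn) hu
  exact ⟨m, hmn, Quotient.mk _ ⟨g, (hP m n u hu g).2 hf, hg⟩,
    Quotient.sound ⟨π, fun x => congrArg g (funext fun i => congrArg x (hπ i).symm)⟩⟩

theorem bijective_padClass (hP : IsInjectionInvariant P) (n : ℕ) :
    Function.Bijective
      (fun c : Σ i : Fin (n + 1), Quotient (varEquiv i (fun f => P i f ∧ NonDegenerate f)) =>
        hP.padClass c.1.is_le c.2) := by
  constructor
  · rintro ⟨i, ⟨f⟩⟩ ⟨j, ⟨g⟩⟩ h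
    obtain ⟨σ, hσ⟩ := hP.exists_equiv_of_padClass_eq i.is_le j.is_le h
    obtain rfl : i = j := Fin.ext (Fin.equiv_iff_eq.1 ⟨σ⟩)
    exact congrArg (Sigma.mk i) (Quotient.sound ⟨σ, hσ⟩)
  · intro c
    obtain ⟨m, hmn, d, rfl⟩ := hP.exists_padClass_eq c
    exact ⟨⟨⟨m, Nat.lt_succ_of_le hmn⟩, d⟩, rfl⟩

end IsInjectionInvariant

theorem stmt14 (P : (n : ℕ) → ((Fin n → Bool) → Bool) → Prop)
    (hP : ∀ (m n : ℕ) (u : Fin m → Fin n), Function.Injective u →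
      ∀ f : (Fin m → Bool) → Bool, P m f ↔ P n (fun x => f (x ∘ u)))
    (n : ℕ) :
    Nat.card (Quotient (varEquiv n (P n)))
      = ∑ i ∈ Finset.range (n + 1),
          Nat.card (Quotient (varEquiv i (fun f => P i f ∧ NonDegenerate f))) := by
  have hbij := IsInjectionInvariant.bijective_padClass hP n
  rw [← Nat.card_congr (Equiv.ofBijective _ hbij), Nat.card_sigma,
    Fin.sum_univ_eq_sum_range
      (fun i => Nat.card (Quotient (varEquiv i (fun f => P i f ∧ NonDegenerate f))))]
end

section
/- The number of 5-variable balanced monotone Boolean functions is 621, and the number of 6-variable balanced monotone Boolean functions is 492288. -/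
/-!
A monotone function of `n + 2` variables is a quadruple of monotone functions `a ≤ b, c ≤ d` of `n`
variables, and its weight is the sum of the four weights. For fixed `a ≤ d`, the functions `b` and
`c` range independently over the interval `[a, d]`, so the weight enumerator in `n + 2` variables is
`∑ a ≤ d, B ^ (|a| + |d|) * (∑ b ∈ [a, d], B ^ |b|) ^ 2`. When the number `B` exceeds the number of
functions, the balanced ones are counted by the digit of this sum in base `B` at position
`2 ^ (n + 1)`. The kernel evaluates the sum for `n = 3` and `n = 4`, where there are only 20 and 168
monotone functions, comparing functions through the binary digits of their truth tables.
-/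

open Finset

/-- Concatenation of Boolean functions as an equivalence: a function of `n + 1` variables is
determined by its restrictions to `x 0 = false` and `x 0 = true`. -/
def concatEquiv (n : ℕ) :
    ((Fin n → Bool) → Bool) × ((Fin n → Bool) → Bool) ≃ ((Fin (n + 1) → Bool) → Bool) where
  toFun p := concatBF p.1 p.2
  invFun f := (fun x => f (Fin.cons false x), fun x => f (Fin.cons true x))
  left_inv p := by ext x <;> simp [concatBF]
  right_inv f := by
    funext x
    induction x using Fin.consCases with
    | cons b y => cases b <;> simp [concatBF]

theorem concatBF_cons {n : ℕ} (g h : (Fin n → Bool) → Bool) (b : Bool) (x : Fin n → Bool) :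
    concatBF g h (Fin.cons b x) = if b = true then h x else g x := by
  simp [concatBF]

theorem concatBF_le_concatBF_iff {n : ℕ} {g h g' h' : (Fin n → Bool) → Bool} :
    concatBF g h ≤ concatBF g' h' ↔ g ≤ g' ∧ h ≤ h' := by
  constructor
  · intro H
    exact ⟨fun x => by simpa [concatBF_cons] using H (Fin.cons false x),
      fun x => by simpa [concatBF_cons] using H (Fin.cons true x)⟩
  · rintro ⟨hg, hh⟩ x
    induction x using Fin.consCases with
    | cons b y => cases b <;> simp [concatBF_cons, hg y, hh y]

theorem isMonotoneBF_concatBF_iff {n : ℕ} {g h : (Fin n → Bool) → Bool} :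
    IsMonotoneBF (concatBF g h) ↔ IsMonotoneBF g ∧ IsMonotoneBF h ∧ g ≤ h := by
  constructor
  · intro H
    refine ⟨fun i x => ?_, fun i x => ?_, fun x => ?_⟩
    · simpa [← Fin.cons_update, concatBF_cons] using H i.succ (Fin.cons false x)
    · simpa [← Fin.cons_update, concatBF_cons] using H i.succ (Fin.cons true x)
    · simpa [concatBF_cons] using H 0 (Fin.cons true x)
  · rintro ⟨hg, hh, hle⟩ i x
    induction x using Fin.consCases with
    | cons b y =>
      induction i using Fin.cases with
      | zero => simpa [concatBF_cons] using hle y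
      | succ i =>
        cases b
        · simpa [← Fin.cons_update, concatBF_cons] using hg i y
        · simpa [← Fin.cons_update, concatBF_cons] using hh i y

theorem weightBF_eq_sum_toNat {n : ℕ} (f : (Fin n → Bool) → Bool) :
    weightBF f = ∑ x, (f x).toNat := by
  rw [weightBF, Nat.card_eq_fintype_card, Fintype.card_subtype, card_filter]
  refine sum_congr rfl fun x _ => ?_
  cases f x <;> rfl

theorem weightBF_concatBF {n : ℕ} (g h : (Fin n → Bool) → Bool) :
    weightBF (concatBF g h) = weightBF g + weightBF h := by
  simp only [weightBF_eq_sum_toNat]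
  rw [← (Fin.consEquiv fun _ : Fin (n + 1) => Bool).sum_comp, Fintype.sum_prod_type]
  simp [Fin.consEquiv, concatBF_cons, add_comm]

open Classical in
/-- The finite set of monotone Boolean functions of `n` variables. -/
noncomputable def monotoneFns (n : ℕ) : Finset ((Fin n → Bool) → Bool) :=
  {f | IsMonotoneBF f}

theorem monotoneFns_zero : monotoneFns 0 = univ := by
  ext f
  simp [monotoneFns, IsMonotoneBF]

section WeightEnumerator

variable {R : Type*} [CommSemiring R]

open Classical in
theorem sum_monotoneFns_succ {n : ℕ} (F : ((Fin (n + 1) → Bool) → Bool) → R) :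
    ∑ f ∈ monotoneFns (n + 1), F f =
      ∑ g ∈ monotoneFns n, ∑ h ∈ monotoneFns n with g ≤ h, F (concatBF g h) := by
  simp only [monotoneFns, filter_filter, sum_filter]
  rw [← (concatEquiv n).sum_comp, Fintype.sum_prod_type]
  refine sum_congr rfl fun g _ => ?_
  by_cases hg : IsMonotoneBF g <;> simp [concatEquiv, isMonotoneBF_concatBF_iff, hg]

open Classical in
theorem sum_monotoneFns_add_two {n : ℕ} (F : ((Fin (n + 2) → Bool) → Bool) → R) :
    ∑ f ∈ monotoneFns (n + 2), F f =
      ∑ a ∈ monotoneFns n, ∑ b ∈ monotoneFns n with a ≤ b, ∑ c ∈ monotoneFns n with a ≤ c,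
        ∑ d ∈ monotoneFns n with b ≤ d ∧ c ≤ d, F (concatBF (concatBF a b) (concatBF c d)) := by
  rw [sum_monotoneFns_succ, sum_monotoneFns_succ]
  refine sum_congr rfl fun a _ => sum_congr rfl fun b _ => ?_
  rw [sum_filter, sum_monotoneFns_succ, sum_filter]
  refine sum_congr rfl fun c _ => ?_
  by_cases hac : a ≤ c <;>
    simp [concatBF_le_concatBF_iff, hac, ← sum_filter, filter_filter, and_comm]

theorem sum_diamond_eq_sum_interval_sq {α : Type*} [Preorder α] [DecidableLE α] (s : Finset α)
    (w : α → R) :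
    ∑ a ∈ s, ∑ b ∈ s with a ≤ b, ∑ c ∈ s with a ≤ c, ∑ d ∈ s with b ≤ d ∧ c ≤ d,
        w a * w b * (w c * w d) =
      ∑ a ∈ s, w a * ∑ d ∈ s with a ≤ d, w d * (∑ b ∈ s with a ≤ b ∧ b ≤ d, w b) ^ 2 := by
  refine sum_congr rfl fun a _ => ?_
  calc
    _ = ∑ b ∈ s with a ≤ b, ∑ d ∈ s with b ≤ d, ∑ c ∈ s with a ≤ c ∧ c ≤ d,
          w a * w b * (w c * w d) :=
      sum_congr rfl fun b _ => sum_comm' (by simp only [mem_filter]; tauto)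
    _ = ∑ d ∈ s with a ≤ d, ∑ b ∈ s with a ≤ b ∧ b ≤ d, ∑ c ∈ s with a ≤ c ∧ c ≤ d,
          w a * w b * (w c * w d) :=
      sum_comm' fun b d => by
        simp only [mem_filter]
        have := @le_trans α _ a b d
        tauto
    _ = _ := by
      rw [mul_sum]
      refine sum_congr rfl fun d _ => ?_
      rw [sq, sum_mul_sum, ← mul_assoc, mul_sum]
      refine sum_congr rfl fun b _ => ?_
      rw [mul_sum]
      exact sum_congr rfl fun c _ => by ring

open Classical in
theorem sum_pow_weightBF_add_two (B : R) (n : ℕ) :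
    ∑ f ∈ monotoneFns (n + 2), B ^ weightBF f =
      ∑ a ∈ monotoneFns n, B ^ weightBF a * ∑ d ∈ monotoneFns n with a ≤ d, B ^ weightBF d *
        (∑ b ∈ monotoneFns n with a ≤ b ∧ b ≤ d, B ^ weightBF b) ^ 2 := by
  simp only [sum_monotoneFns_add_two, weightBF_concatBF, pow_add,
    ← sum_diamond_eq_sum_interval_sq]

end WeightEnumerator

/-- The truth table of a Boolean function, read as a number with `2 ^ n` binary digits; the values
with `x 0 = true` occupy the upper half. -/
def truthTable : (n : ℕ) → ((Fin n → Bool) → Bool) → ℕ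
  | 0, f => (f Fin.elim0).toNat
  | n + 1, f => 2 ^ 2 ^ n * truthTable n (fun x => f (Fin.cons true x)) +
      truthTable n (fun x => f (Fin.cons false x))

theorem truthTable_lt : ∀ (n : ℕ) (f : (Fin n → Bool) → Bool), truthTable n f < 2 ^ 2 ^ n
  | 0, f => by simpa [truthTable] using Bool.toNat_lt (f Fin.elim0)
  | n + 1, f => by
    rw [truthTable, pow_succ 2 n, pow_mul, sq]
    have h₁ := truthTable_lt n fun x => f (Fin.cons true x)
    have h₀ := truthTable_lt n fun x => f (Fin.cons false x)
    nlinarith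

theorem truthTable_concatBF {n : ℕ} (g h : (Fin n → Bool) → Bool) :
    truthTable (n + 1) (concatBF g h) = 2 ^ 2 ^ n * truthTable n h + truthTable n g := by
  simp [truthTable, concatBF_cons]

/-- Inclusion of the sets of binary digits. It is phrased with `Nat.beq` and `Nat.land`, which the
kernel evaluates natively. -/
def bitSubset (a b : ℕ) : Bool :=
  Nat.beq (Nat.land a b) a

theorem bitSubset_iff_land_eq {a b : ℕ} : bitSubset a b ↔ a &&& b = a :=
  iff_of_eq Nat.beq_eq

theorem bitSubset_two_pow_mul_add_iff {i a b c d : ℕ} (ha : a < 2 ^ i) (hc : c < 2 ^ i) :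
    bitSubset (2 ^ i * b + a) (2 ^ i * d + c) ↔ bitSubset b d ∧ bitSubset a c := by
  have split (x y : ℕ) : x = y ↔ x / 2 ^ i = y / 2 ^ i ∧ x % 2 ^ i = y % 2 ^ i :=
    ⟨by rintro rfl; exact ⟨rfl, rfl⟩, fun h => by
      rw [← Nat.div_add_mod x (2 ^ i), h.1, h.2, Nat.div_add_mod]⟩
  simp only [bitSubset_iff_land_eq]
  rw [split, Nat.and_div_two_pow, Nat.and_mod_two_pow]
  simp [Nat.mul_add_div, Nat.div_eq_of_lt, Nat.mod_eq_of_lt, ha, hc]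

theorem bitSubset_truthTable_iff {n : ℕ} {f g : (Fin n → Bool) → Bool} :
    bitSubset (truthTable n f) (truthTable n g) ↔ f ≤ g := by
  induction n with
  | zero =>
    have : f ≤ g ↔ f Fin.elim0 ≤ g Fin.elim0 :=
      ⟨fun h => h _, fun h x => by rwa [Subsingleton.elim x Fin.elim0]⟩
    rw [this, truthTable, truthTable]
    cases f Fin.elim0 <;> cases g Fin.elim0 <;> decide
  | succ n ih =>
    obtain ⟨⟨f₀, f₁⟩, rfl⟩ := (concatEquiv n).surjective f
    obtain ⟨⟨g₀, g₁⟩, rfl⟩ := (concatEquiv n).surjective g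
    simp only [concatEquiv, Equiv.coe_fn_mk, concatBF_le_concatBF_iff, truthTable_concatBF]
    rw [bitSubset_two_pow_mul_add_iff (truthTable_lt n _) (truthTable_lt n _), ih, ih, and_comm]

/-- The pairs `(truthTable n f, B ^ weightBF f)` for all monotone `f` of `n` variables. -/
def monotoneTables (B : ℕ) : ℕ → List (ℕ × ℕ)
  | 0 => [(0, 1), (1, B)]
  | n + 1 => (monotoneTables B n).flatMap fun g =>
      ((monotoneTables B n).filter fun h => bitSubset g.1 h.1).map fun h =>
        (2 ^ 2 ^ n * h.1 + g.1, g.2 * h.2)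

/-- The sum of the values of `F` over a list. It is written with `List.rec` and `Nat.add` because
the kernel evaluates these several times faster than `List.map`, `List.sum` and `+`. -/
noncomputable def listSum {α : Type*} (F : α → ℕ) (l : List α) : ℕ :=
  List.rec 0 (fun x _ s => Nat.add (F x) s) l

theorem listSum_eq_sum_map {α : Type*} (F : α → ℕ) (l : List α) :
    listSum F l = (l.map F).sum := by
  induction l with
  | nil => rfl
  | cons x l ih => rw [List.map_cons, List.sum_cons, ← ih]; rfl

theorem listSum_map {α β : Type*} (F : β → ℕ) (g : α → β) (l : List α) :
    listSum F (l.map g) = listSum (fun x => F (g x)) l := by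
  simp only [listSum_eq_sum_map, List.map_map, Function.comp_def]

theorem listSum_flatMap {α β : Type*} (F : β → ℕ) (g : α → List β) (l : List α) :
    listSum F (l.flatMap g) = listSum (fun x => listSum F (g x)) l := by
  simp only [listSum_eq_sum_map, List.flatMap, List.map_flatten, List.sum_flatten, List.map_map,
    Function.comp_def]

theorem listSum_filter {α : Type*} (F : α → ℕ) (p : α → Bool) (l : List α) :
    listSum F (l.filter p) = listSum (fun x => if p x then F x else 0) l := by
  simp [listSum_eq_sum_map, List.sum_map_ite]

theorem sum_filter_eq_listSum_filter {ι α : Type*} {s : Finset ι} {c : ι → α} {l : List α}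
    (hl : ∀ F : α → ℕ, ∑ i ∈ s, F (c i) = listSum F l) (p : α → Bool) (F : α → ℕ) :
    ∑ i ∈ s with p (c i), F (c i) = listSum F (l.filter p) := by
  rw [sum_filter, listSum_filter, ← hl]

theorem sum_monotoneFns_eq_listSum (B n : ℕ) (F : ℕ × ℕ → ℕ) :
    ∑ f ∈ monotoneFns n, F (truthTable n f, B ^ weightBF f) = listSum F (monotoneTables B n) := by
  classical
  induction n generalizing F with
  | zero =>
    rw [monotoneFns_zero, ← (Equiv.funUnique (Fin 0 → Bool) Bool).symm.sum_comp]
    simp [truthTable, monotoneTables, listSum_eq_sum_map, weightBF_eq_sum_toNat, add_comm]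
  | succ n ih =>
    simp only [sum_monotoneFns_succ, monotoneTables, listSum_flatMap, listSum_map, ← ih,
      ← sum_filter_eq_listSum_filter ih, bitSubset_truthTable_iff, truthTable_concatBF,
      weightBF_concatBF, pow_add]

/-- The right-hand side of `sum_pow_weightBF_add_two`, evaluated on a list of pairs of a truth table
and a power of `B`; the interval `[a, d]` is searched within the upper set of `a`. -/
noncomputable def intervalSum (l : List (ℕ × ℕ)) : ℕ :=
  listSum (fun a =>
    let upper := l.filter fun b => bitSubset a.1 b.1
    a.2 * listSum (fun d =>
      d.2 * listSum (fun b => bif bitSubset b.1 d.1 then b.2 else 0) upper ^ 2) upper) l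

theorem intervalSum_monotoneTables (B n : ℕ) :
    intervalSum (monotoneTables B n) = ∑ f ∈ monotoneFns (n + 2), B ^ weightBF f := by
  classical
  simp only [intervalSum, sum_pow_weightBF_add_two, ← sum_monotoneFns_eq_listSum,
    ← sum_filter_eq_listSum_filter (sum_monotoneFns_eq_listSum B n), bitSubset_truthTable_iff,
    Bool.cond_eq_ite, ← sum_filter, filter_filter]

theorem sum_pow_eq_card_add_mul_sum {α : Type*} (s : Finset α) (w : α → ℕ) (B : ℕ) :
    ∑ x ∈ s, B ^ w x = #{x ∈ s | w x = 0} + B * ∑ x ∈ s with w x ≠ 0, B ^ (w x - 1) := by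
  rw [← sum_filter_add_sum_filter_not s (w · = 0), mul_sum, card_eq_sum_ones]
  congr 1
  · exact sum_congr rfl fun x hx => by rw [(mem_filter.1 hx).2, pow_zero]
  · exact sum_congr rfl fun x hx => (mul_pow_sub_one (mem_filter.1 hx).2 B).symm

theorem sum_pow_div_pow_mod_eq_card {α : Type*} (s : Finset α) (w : α → ℕ) {B : ℕ} (hs : #s < B)
    (t : ℕ) : (∑ x ∈ s, B ^ w x) / B ^ t % B = #{x ∈ s | w x = t} := by
  have hB : 0 < B := Nat.zero_lt_of_lt hs
  have hlt (p : α → Prop) [DecidablePred p] : #{x ∈ s | p x} < B :=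
    (card_filter_le s p).trans_lt hs
  induction t generalizing s w with
  | zero =>
    rw [pow_zero, Nat.div_one, sum_pow_eq_card_add_mul_sum, Nat.add_mul_mod_self_left,
      Nat.mod_eq_of_lt (hlt _)]
  | succ t ih =>
    rw [pow_succ', ← Nat.div_div_eq_div_mul, sum_pow_eq_card_add_mul_sum,
      Nat.add_mul_div_left _ _ hB, Nat.div_eq_of_lt (hlt _), zero_add,
      ih _ _ (hlt _) fun p _ => (card_filter_le _ p).trans_lt (hlt _), filter_filter]
    congr 1
    exact filter_congr fun x _ => by omega

theorem card_monotone_balanced {n B : ℕ} (hB : 2 ^ 2 ^ (n + 2) < B) :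
    Nat.card {f : (Fin (n + 2) → Bool) → Bool // IsMonotoneBF f ∧ IsBalanced f} =
      intervalSum (monotoneTables B n) / B ^ 2 ^ (n + 1) % B := by
  have hcard : #(monotoneFns (n + 2)) < B := (card_le_univ _).trans_lt (by simpa using hB)
  rw [intervalSum_monotoneTables, sum_pow_div_pow_mod_eq_card _ _ hcard]
  exact Nat.subtype_card _ fun f => by simp [monotoneFns, IsBalanced, weightBF]

theorem stmt18 :
    Nat.card {f : (Fin 5 → Bool) → Bool // IsMonotoneBF f ∧ IsBalanced f} = 621
      ∧ Nat.card {f : (Fin 6 → Bool) → Bool // IsMonotoneBF f ∧ IsBalanced f} = 492288 := by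
  constructor
  · rw [card_monotone_balanced (B := 2 ^ 33) (by norm_num)]
    decide +kernel
  · rw [card_monotone_balanced (B := 2 ^ 65) (by norm_num)]
    decide +kernel
end
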